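/- Let U be an open neighborhood of (0,0) in ℝ² contained in {|η| + |ε| < 1/100}, and suppose ν : U → ℝ and Ψ : U × [0,π] → ℝ are real-analytic functions such that for every (η,ε) ∈ U: the function x ↦ Ψ(η,ε,x) satisfies T̃_{η,ε}Ψ(η,ε,·) + ν(η,ε)·Ψ(η,ε,·) = 0 on (0,π), ∂_x Ψ(η,ε,0) = ∂_x Ψ(η,ε,π) = 0, and the normalization ∫₀^π Ψ(η,ε,x) cos(2x) dx = π/2; and suppose ν(0,0) = 4 and Ψ(0,0,x) = cos(2x). Then there exist a constant C > 0 and a neighborhood V ⊆ U of (0,0) such that |ν(η,ε) − 4| ≤ C(η² + ε²) for all (η,ε) ∈ V. -/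

import Mathlib

open Set Real

noncomputable section

/-- The operator `T̃_{η,ε} u = u'' − [η(1+ε)/(1−η(1+ε)x)] u'`, with derivatives taken
within `[0,π]`. -/
def Ttde (η ε : ℝ) (u : ℝ → ℝ) (x : ℝ) : ℝ :=
  derivWithin (derivWithin u (Set.Icc 0 π)) (Set.Icc 0 π) x
    - (η * (1 + ε) / (1 - η * (1 + ε) * x)) * derivWithin u (Set.Icc 0 π) x

/-!
Write `u = Ψ p`, `u₀ = Ψ 0`.  Green's identity turns the two eigenvalue equations into
`(ν p - ν 0) ∫ u u₀ = ∫ q u' u₀`, where `q` is the drift coefficient of `T̃_p`.  Since `q = O(p)`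
and `q` is constant in `x` up to `O(p²)`, the right-hand side is `q(p, 0) ∫ u₀' u₀ + O(p²)`.
Pairing the equation for `u₀` with `u₀'` gives `ν(0) ∫ u₀' u₀ = -∫ u₀' u₀''`, half the decrement
of `u₀'²` over the interval, which the Neumann conditions make zero; hence `∫ u₀' u₀ = 0` (if
`ν(0) = 0`, then `u₀'` itself vanishes).  Finally `∫ u u₀ → ∫ u₀² > 0`.
-/

section

open Filter Topology Asymptotics intervalIntegral
open MeasureTheory (volume)
open scoped ContDiff

theorem isBigO_prod_principal_of_isCompact {α X E F : Type*} [TopologicalSpace X] [Norm E]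
    [SeminormedAddCommGroup F] {l : Filter α} {K : Set X} (hK : IsCompact K) {f : α × X → E}
    {g : α × X → F} (h : ∀ x ∈ K, f =O[l ×ˢ 𝓝 x] g) : f =O[l ×ˢ 𝓟 K] g := by
  refine hK.induction_on (p := fun s => f =O[l ×ˢ 𝓟 s] g) ?_ ?_ ?_ ?_
  · simp only [principal_empty, prod_bot, isBigO_bot]
  · exact fun s t hst ht => ht.mono (prod_mono le_rfl (principal_mono.2 hst))
  · intro s t hs ht
    rw [← sup_principal, prod_sup]
    exact hs.sup ht
  · intro x hx
    obtain ⟨C, hC⟩ := (h x hx).bound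
    obtain ⟨P, hP, Q, hQ, hPQ⟩ := eventually_prod_iff.1 hC
    exact ⟨{y | Q y}, mem_nhdsWithin_of_mem_nhds hQ,
      .of_bound C (eventually_prod_principal_iff.2 (hP.mono fun _ hp _ hy => hPQ hp hy))⟩

theorem isBigO_sub_of_contDiffAt {E X F : Type*} [NormedAddCommGroup E] [NormedSpace ℝ E]
    [NormedAddCommGroup X] [NormedSpace ℝ X] [NormedAddCommGroup F] [NormedSpace ℝ F]
    {f : E × X → F} {p₀ : E} {K : Set X} (hK : IsCompact K)
    (hf : ∀ x ∈ K, ContDiffAt ℝ 1 f (p₀, x)) :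
    (fun q => f q - f (p₀, q.2)) =O[𝓝 p₀ ×ˢ 𝓟 K] fun q => q.1 - p₀ := by
  refine isBigO_prod_principal_of_isCompact hK fun x hx => ?_
  have h_strict := ((hf x hx).hasStrictFDerivAt one_ne_zero).isBigO_sub
  have h_proj : Tendsto (fun q : E × X => (q, (p₀, q.2))) (𝓝 (p₀, x)) (𝓝 ((p₀, x), (p₀, x))) :=
    Continuous.tendsto' (by fun_prop) _ _ rfl
  rw [← nhds_prod_eq]
  refine (h_strict.comp_tendsto h_proj).trans (isBigO_of_le _ fun q => ?_)
  simp [Prod.norm_def]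

theorem isBigO_intervalIntegral {α E F : Type*} [NormedAddCommGroup E] [NormedSpace ℝ E]
    [NormedAddCommGroup F] {l : Filter α} {a b : ℝ} (hab : a ≤ b) {f : α × ℝ → E} {g : α → F}
    (hf : f =O[l ×ˢ 𝓟 (Icc a b)] fun q => g q.1) :
    (fun p => ∫ x in a..b, f (p, x)) =O[l] g := by
  have h_swap : (fun q : ℝ × α => f q.swap) =O[𝓟 (Ioc a b) ×ˢ l] (g ∘ Prod.snd) :=
    (hf.mono (prod_mono le_rfl (principal_mono.2 Ioc_subset_Icc_self))).comp_tendsto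
      tendsto_prod_swap
  simp only [integral_of_le hab]
  exact h_swap.set_integral_isBigO _root_.measure_Ioc_lt_top

theorem isBigO_of_mul_isBigO_of_tendsto {α F : Type*} [NormedAddCommGroup F] {l : Filter α}
    {f I : α → ℝ} {g : α → F} {c : ℝ} (h : (fun p => f p * I p) =O[l] g) (hI : Tendsto I l (𝓝 c))
    (hc : c ≠ 0) : f =O[l] g := by
  refine IsBigO.of_norm_right (g' := g) ?_
  have h_div := h.norm_right.mul ((hI.inv₀ hc).isBigO_one ℝ)
  simp only [mul_one] at h_div
  refine h_div.congr' ?_ .rfl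
  filter_upwards [hI.eventually_ne hc] with p hp
  exact mul_inv_cancel_right₀ hp (f p)

theorem exists_isOpen_forall_norm_le_of_isBigO {X E F : Type*} [TopologicalSpace X] [Norm E]
    [SeminormedAddCommGroup F] {f : X → E} {g : X → F} {x₀ : X} {U : Set X}
    (h : f =O[𝓝 x₀] g) (hU : U ∈ 𝓝 x₀) :
    ∃ C > (0 : ℝ), ∃ V ⊆ U, IsOpen V ∧ x₀ ∈ V ∧ ∀ x ∈ V, ‖f x‖ ≤ C * ‖g x‖ := by
  obtain ⟨C, hC, h_bound⟩ := h.exists_pos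
  obtain ⟨V, hV, hV_open, hx₀⟩ := eventually_nhds_iff.1 (h_bound.bound.and hU)
  exact ⟨C, hC, V, fun x hx => (hV x hx).2, hV_open, hx₀, fun x hx => (hV x hx).1⟩

theorem isBigO_norm_sq_sq_add_sq (l : Filter (ℝ × ℝ)) :
    (fun p : ℝ × ℝ => ‖p‖ ^ 2) =O[l] fun p => p.1 ^ 2 + p.2 ^ 2 := by
  refine isBigO_of_le _ fun p => ?_
  rw [norm_pow, norm_norm, Real.norm_of_nonneg (by positivity), Prod.norm_def]
  rcases max_choice ‖p.1‖ ‖p.2‖ with h | h <;>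
    rw [h, Real.norm_eq_abs, sq_abs]
  · exact le_add_of_nonneg_right (sq_nonneg _)
  · exact le_add_of_nonneg_left (sq_nonneg _)

section ParametricFunctions

variable {E F : Type*} [NormedAddCommGroup E] [NormedSpace ℝ E] [NormedAddCommGroup F]
  [NormedSpace ℝ F]

theorem contDiffAt_deriv_of_uncurry {f : E → ℝ → F} {m n : WithTop ℕ∞} {q : E × ℝ}
    (hf : ContDiffAt ℝ n (fun q : E × ℝ => f q.1 q.2) q) (hmn : m + 1 ≤ n) :
    ContDiffAt ℝ m (fun q : E × ℝ => deriv (f q.1) q.2) q := by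
  have hf' : ContDiffAt ℝ n (Function.uncurry fun (q : E × ℝ) y => f q.1 y) (q, q.2) :=
    ContDiffAt.comp (g := fun q : E × ℝ => f q.1 q.2) (f := fun r : (E × ℝ) × ℝ => (r.1.1, r.2))
      (q, q.2) hf (by fun_prop)
  exact (hf'.fderiv contDiffAt_snd hmn).clm_apply contDiffAt_const

theorem contDiffAt_comp_mk_snd {f : E × ℝ → F} {n : WithTop ℕ∞} {p₀ : E} {x : ℝ}
    (hf : ContDiffAt ℝ n f (p₀, x)) : ContDiffAt ℝ n (fun q : E × ℝ => f (p₀, q.2)) (p₀, x) :=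
  hf.comp (f := fun q : E × ℝ => (p₀, q.2)) (p₀, x) (by fun_prop)

theorem eventually_forall_contDiffAt {n : WithTop ℕ∞} (hn : n ≠ ∞) {f : E × ℝ → F} {p₀ : E}
    {K : Set ℝ} (hK : IsCompact K) (hf : ∀ x ∈ K, ContDiffAt ℝ n f (p₀, x)) :
    ∀ᶠ p in 𝓝 p₀, ∀ x ∈ K, ContDiffAt ℝ n (fun y => f (p, y)) x := by
  refine hK.eventually_forall_of_forall_eventually fun x hx => ?_
  filter_upwards [(hf x hx).eventually hn] with q hq
  exact hq.comp q.2 (contDiffAt_const.prodMk contDiffAt_id)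

theorem eventually_intervalIntegrable_of_contDiffAt {f : E × ℝ → F} {p₀ : E} {a b : ℝ}
    (hf : ∀ x ∈ uIcc a b, ContDiffAt ℝ 1 f (p₀, x)) :
    ∀ᶠ p in 𝓝 p₀, IntervalIntegrable (fun x => f (p, x)) volume a b := by
  filter_upwards [eventually_forall_contDiffAt (by simp) isCompact_uIcc hf] with p hp
  exact ContinuousOn.intervalIntegrable fun x hx => (hp x hx).continuousAt.continuousWithinAt

theorem tendsto_intervalIntegral_of_contDiffAt {f : E × ℝ → F} {p₀ : E} {a b : ℝ} (hab : a ≤ b)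
    (hf : ∀ x ∈ Icc a b, ContDiffAt ℝ 1 f (p₀, x)) :
    Tendsto (fun p => ∫ x in a..b, f (p, x)) (𝓝 p₀) (𝓝 (∫ x in a..b, f (p₀, x))) := by
  have h_int := eventually_intervalIntegrable_of_contDiffAt (uIcc_of_le hab ▸ hf)
  have h_sub : (fun p => ∫ x in a..b, f (p, x) - f (p₀, x)) =O[𝓝 p₀] fun p => p - p₀ :=
    isBigO_intervalIntegral hab (f := fun q => f q - f (p₀, q.2)) (g := fun p => p - p₀)
      (isBigO_sub_of_contDiffAt isCompact_Icc hf)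
  have h_zero : Tendsto (fun p => p - p₀) (𝓝 p₀) (𝓝 0) := by
    simpa only [sub_self] using! (tendsto_id (x := 𝓝 p₀)).sub_const p₀
  refine tendsto_sub_nhds_zero_iff.1 ((h_sub.trans_tendsto h_zero).congr' ?_)
  filter_upwards [h_int] with p hp
  exact integral_sub hp h_int.self_of_nhds

end ParametricFunctions

theorem integral_mul_self_pos {a b : ℝ} (hab : a < b) {f : ℝ → ℝ} (hf : ContinuousOn f (Icc a b))
    (hf_ne : ∃ x ∈ Icc a b, f x ≠ 0) : 0 < ∫ x in a..b, f x * f x := by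
  obtain ⟨c, hc, hfc⟩ := hf_ne
  exact integral_pos hab (hf.mul hf) (fun x _ => mul_self_nonneg (f x)) ⟨c, hc, mul_self_pos.2 hfc⟩

section NeumannProblem

variable {a b μ κ : ℝ} {u v q : ℝ → ℝ}

theorem integral_mul_deriv_deriv_of_neumann (hu : ∀ x ∈ uIcc a b, ContDiffAt ℝ 1 u x)
    (hv : ∀ x ∈ uIcc a b, ContDiffAt ℝ 2 v x) (hva : deriv v a = 0) (hvb : deriv v b = 0) :
    ∫ x in a..b, u x * deriv (deriv v) x = -∫ x in a..b, deriv u x * deriv v x := by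
  have hv' : ∀ x ∈ uIcc a b, ContDiffAt ℝ 1 (deriv v) x := fun x hx =>
    (hv x hx).derivWithin (by norm_num)
  have h_integrable_deriv {w : ℝ → ℝ} (hw : ∀ x ∈ uIcc a b, ContDiffAt ℝ 1 w x) :
      IntervalIntegrable (deriv w) volume a b :=
    ContinuousOn.intervalIntegrable fun x hx =>
      ((hw x hx).derivWithin (m := 0) (by norm_num)).continuousAt.continuousWithinAt
  rw [integral_mul_deriv_eq_deriv_mul
    (fun x hx => ((hu x hx).differentiableAt one_ne_zero).hasDerivAt)
    (fun x hx => ((hv' x hx).differentiableAt one_ne_zero).hasDerivAt)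
    (h_integrable_deriv hu) (h_integrable_deriv hv')]
  simp only [hva, hvb, mul_zero, sub_zero, zero_sub]

theorem integral_deriv_deriv_mul_of_neumann
    (hu : ∀ x ∈ uIcc a b, ContDiffAt ℝ 2 u x) (hv : ∀ x ∈ uIcc a b, ContDiffAt ℝ 2 v x)
    (hua : deriv u a = 0) (hub : deriv u b = 0) (hva : deriv v a = 0) (hvb : deriv v b = 0) :
    ∫ x in a..b, deriv (deriv u) x * v x = ∫ x in a..b, u x * deriv (deriv v) x := by
  simp only [mul_comm _ (v _)]
  rw [integral_mul_deriv_deriv_of_neumann (fun x hx => (hv x hx).of_le one_le_two) hu hua hub,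
    integral_mul_deriv_deriv_of_neumann (fun x hx => (hu x hx).of_le one_le_two) hv hva hvb]
  simp only [mul_comm (deriv u _)]

theorem sub_mul_integral_mul_of_neumann (hab : a ≤ b)
    (hu : ∀ x ∈ Icc a b, ContDiffAt ℝ 2 u x) (hv : ∀ x ∈ Icc a b, ContDiffAt ℝ 2 v x)
    (hua : deriv u a = 0) (hub : deriv u b = 0) (hva : deriv v a = 0) (hvb : deriv v b = 0)
    (hu_eq : ∀ x ∈ Ioo a b, deriv (deriv u) x - q x * deriv u x + μ * u x = 0)
    (hv_eq : ∀ x ∈ Ioo a b, deriv (deriv v) x + κ * v x = 0) :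
    (μ - κ) * ∫ x in a..b, u x * v x = ∫ x in a..b, q x * deriv u x * v x := by
  rw [← uIcc_of_le hab] at hu hv
  have h_cont {w : ℝ → ℝ} (hw : ∀ x ∈ uIcc a b, ContDiffAt ℝ 2 w x) : ContinuousOn w (uIcc a b) :=
    fun x hx => (hw x hx).continuousAt.continuousWithinAt
  have h_cont_deriv2 {w : ℝ → ℝ} (hw : ∀ x ∈ uIcc a b, ContDiffAt ℝ 2 w x) :
      ContinuousOn (deriv (deriv w)) (uIcc a b) := fun x hx =>
    (((hw x hx).derivWithin (m := 1) (by norm_num)).derivWithin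
      (m := 0) (by norm_num)).continuousAt.continuousWithinAt
  have h_int_left : IntervalIntegrable (fun x => deriv (deriv u) x * v x) volume a b :=
    ((h_cont_deriv2 hu).mul (h_cont hv)).intervalIntegrable
  have h_int_right : IntervalIntegrable (fun x => u x * deriv (deriv v) x) volume a b :=
    ((h_cont hu).mul (h_cont_deriv2 hv)).intervalIntegrable
  have h_int_mul : IntervalIntegrable (fun x => u x * v x) volume a b :=
    ((h_cont hu).mul (h_cont hv)).intervalIntegrable
  symm
  calc ∫ x in a..b, q x * deriv u x * v x
      = ∫ x in a..b, (deriv (deriv u) x * v x - u x * deriv (deriv v) x)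
          + (μ - κ) * (u x * v x) := by
        refine integral_congr_Ioo_of_le hab fun x hx => ?_
        linear_combination u x * hv_eq x hx - v x * hu_eq x hx
    _ = (μ - κ) * ∫ x in a..b, u x * v x := by
        rw [integral_add (h_int_left.sub h_int_right) (h_int_mul.const_mul _),
          integral_sub h_int_left h_int_right,
          integral_deriv_deriv_mul_of_neumann hu hv hua hub hva hvb, sub_self, zero_add,
          integral_const_mul]

theorem deriv_eq_zero_of_deriv_deriv_eq_zero (hu : ∀ x ∈ Icc a b, ContDiffAt ℝ 2 u x)
    (hua : deriv u a = 0) (hu_eq : ∀ x ∈ Ioo a b, deriv (deriv u) x = 0) :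
    ∀ x ∈ Icc a b, deriv u x = 0 := by
  intro x hx
  rcases hx.1.eq_or_lt with rfl | hax
  · exact hua
  have hu' : ∀ y ∈ Icc a x, DifferentiableAt ℝ (deriv u) y := fun y hy =>
    ((hu y ⟨hy.1, hy.2.trans hx.2⟩).derivWithin (m := 1) (by norm_num)).differentiableAt one_ne_zero
  obtain ⟨c, hc, h_slope⟩ := exists_deriv_eq_slope (deriv u) hax
    (fun y hy => (hu' y hy).continuousAt.continuousWithinAt)
    (fun y hy => (hu' y (Ioo_subset_Icc_self hy)).differentiableWithinAt)
  rw [hu_eq c ⟨hc.1, hc.2.trans_le hx.2⟩, hua, sub_zero, eq_comm,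
    div_eq_zero_iff] at h_slope
  exact h_slope.resolve_right (sub_pos.2 hax).ne'

theorem integral_deriv_mul_self_of_neumann (hab : a ≤ b) (hu : ∀ x ∈ Icc a b, ContDiffAt ℝ 2 u x)
    (hua : deriv u a = 0) (hub : deriv u b = 0)
    (hu_eq : ∀ x ∈ Ioo a b, deriv (deriv u) x + μ * u x = 0) :
    ∫ x in a..b, deriv u x * u x = 0 := by
  rcases eq_or_ne μ 0 with rfl | hμ
  · have hu' := deriv_eq_zero_of_deriv_deriv_eq_zero hu hua
      (by simpa only [zero_mul, add_zero] using hu_eq)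
    refine (integral_congr_Ioo_of_le hab fun x hx => ?_).trans integral_zero
    simp only [hu' x (Ioo_subset_Icc_self hx), zero_mul]
  rw [← uIcc_of_le hab] at hu
  have h_antisymm := integral_mul_deriv_deriv_of_neumann
    (fun x hx => (hu x hx).derivWithin (by norm_num)) hu hua hub
  have h_energy : μ * ∫ x in a..b, deriv u x * u x
      = -∫ x in a..b, deriv u x * deriv (deriv u) x := by
    rw [← integral_const_mul, ← intervalIntegral.integral_neg]
    refine integral_congr_Ioo_of_le hab fun x hx => ?_
    linear_combination deriv u x * hu_eq x hx
  simp only [mul_comm (deriv (deriv u) _)] at h_antisymm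
  refine (mul_eq_zero.1 ?_).resolve_left hμ
  linarith

end NeumannProblem

/-- The coefficient `η(1+ε)/(1−η(1+ε)x)` of `u'` in `T̃_{η,ε}`, with `p = (η, ε)`. -/
def drift (p : ℝ × ℝ) (x : ℝ) : ℝ :=
  p.1 * (1 + p.2) / (1 - p.1 * (1 + p.2) * x)

theorem derivWithin_Icc_eqOn_deriv {a b : ℝ} (hab : a < b) {u : ℝ → ℝ}
    (hu : ∀ x ∈ Icc a b, DifferentiableAt ℝ u x) :
    EqOn (derivWithin u (Icc a b)) (deriv u) (Icc a b) :=
  fun x hx => (hu x hx).derivWithin (uniqueDiffOn_Icc hab x hx)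

theorem Ttde_eq_deriv {p : ℝ × ℝ} {u : ℝ → ℝ} (hu : ∀ x ∈ Icc 0 π, ContDiffAt ℝ 2 u x) {x : ℝ}
    (hx : x ∈ Icc 0 π) : Ttde p.1 p.2 u x = deriv (deriv u) x - drift p x * deriv u x := by
  have h_deriv := derivWithin_Icc_eqOn_deriv pi_pos fun y hy =>
    (hu y hy).differentiableAt two_ne_zero
  have h_deriv2 := derivWithin_Icc_eqOn_deriv pi_pos fun y hy =>
    ((hu y hy).derivWithin (m := 1) (by norm_num)).differentiableAt one_ne_zero
  rw [Ttde, derivWithin_congr h_deriv (h_deriv hx), h_deriv2 hx, h_deriv hx, drift]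

theorem drift_zero (x : ℝ) : drift 0 x = 0 := by
  simp [drift]

theorem contDiffAt_drift_zero (x : ℝ) {n : WithTop ℕ∞} :
    ContDiffAt ℝ n (fun q : (ℝ × ℝ) × ℝ => drift q.1 q.2) (0, x) := by
  unfold drift
  exact ContDiffAt.div (by fun_prop) (by fun_prop) (by simp)

theorem isBigO_drift {K : Set ℝ} (hK : IsCompact K) :
    (fun q : (ℝ × ℝ) × ℝ => drift q.1 q.2) =O[𝓝 0 ×ˢ 𝓟 K] fun q => q.1 := by
  simpa only [drift_zero, sub_zero] using
    isBigO_sub_of_contDiffAt hK fun x _ => contDiffAt_drift_zero x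

theorem isBigO_drift_sub {K : Set ℝ} (hK : IsCompact K) :
    (fun q : (ℝ × ℝ) × ℝ => drift q.1 q.2 - drift q.1 0) =O[𝓝 0 ×ˢ 𝓟 K] fun q => ‖q.1‖ ^ 2 := by
  have h_factor : ∀ᶠ q in 𝓝 0 ×ˢ 𝓟 K,
      drift q.1 q.2 - drift q.1 0 = drift q.1 0 * (q.2 * drift q.1 q.2) := by
    rw [eventually_prod_principal_iff]
    refine hK.eventually_forall_of_forall_eventually fun x _ => ?_
    have h_denom : ContinuousAt (fun q : (ℝ × ℝ) × ℝ => 1 - q.1.1 * (1 + q.1.2) * q.2) (0, x) := by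
      fun_prop
    filter_upwards [h_denom.eventually_ne (by simp : _ ≠ (0 : ℝ))] with q hq
    simp only [drift]
    field_simp
    ring
  have h_at_zero : (fun q : (ℝ × ℝ) × ℝ => drift q.1 0) =O[𝓝 0 ×ˢ 𝓟 K] fun q => q.1 :=
    (isBigO_drift isCompact_singleton).comp_tendsto
      (tendsto_fst.prodMk (tendsto_principal.2 (.of_forall fun _ => rfl)))
  have h_mul_drift : (fun q : (ℝ × ℝ) × ℝ => q.2 * drift q.1 q.2) =O[𝓝 0 ×ˢ 𝓟 K] fun q => q.1 := by
    simpa only [drift_zero, mul_zero, sub_zero] using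
      isBigO_sub_of_contDiffAt hK fun x _ => contDiffAt_snd.mul (contDiffAt_drift_zero x)
  simpa only [sq] using (h_at_zero.norm_right.mul h_mul_drift.norm_right).congr'
    (h_factor.mono fun _ hq => hq.symm) .rfl

theorem isBigO_drift_mul_deriv_mul_sub {K : Set ℝ} (hK : IsCompact K) {Ψ : ℝ × ℝ → ℝ → ℝ}
    (hΨ : ∀ x ∈ K, ContDiffAt ℝ 2 (fun q : (ℝ × ℝ) × ℝ => Ψ q.1 q.2) (0, x)) :
    (fun q : (ℝ × ℝ) × ℝ =>
      drift q.1 q.2 * deriv (Ψ q.1) q.2 * Ψ 0 q.2 - drift q.1 0 * (deriv (Ψ 0) q.2 * Ψ 0 q.2))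
      =O[𝓝 0 ×ˢ 𝓟 K] fun q => ‖q.1‖ ^ 2 := by
  have hΨ' : ∀ x ∈ K, ContDiffAt ℝ 1 (fun q : (ℝ × ℝ) × ℝ => deriv (Ψ q.1) q.2) (0, x) :=
    fun x hx => contDiffAt_deriv_of_uncurry (hΨ x hx) (by norm_num)
  have h_bounded {f : (ℝ × ℝ) × ℝ → ℝ} (hf : ∀ x ∈ K, ContinuousAt f (0, x)) :
      (fun q : (ℝ × ℝ) × ℝ => f (0, q.2)) =O[𝓝 0 ×ˢ 𝓟 K] fun _ => (1 : ℝ) := by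
    have hf₀ : ContinuousOn (fun x => f (0, x)) K := fun x hx =>
      ((hf x hx).comp (f := fun y => (0, y)) (by fun_prop)).continuousWithinAt
    exact (hf₀.isBigO_principal hK (by simp)).comp_tendsto tendsto_snd
  have h_deriv_sub : (fun q : (ℝ × ℝ) × ℝ => deriv (Ψ q.1) q.2 - deriv (Ψ 0) q.2)
      =O[𝓝 0 ×ˢ 𝓟 K] fun q => q.1 := by
    simpa only [sub_zero] using isBigO_sub_of_contDiffAt hK hΨ'
  have h_Ψ₀ := h_bounded fun x hx => (hΨ x hx).continuousAt
  have h_Ψ₀' := h_bounded fun x hx => (hΨ' x hx).continuousAt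
  have h_left := ((isBigO_drift hK).norm_right.mul h_deriv_sub.norm_right).mul h_Ψ₀
  have h_right := (isBigO_drift_sub hK).mul (h_Ψ₀'.mul h_Ψ₀)
  simp only [mul_one, ← sq, one_pow] at h_left h_right
  refine (h_left.add h_right).congr_left fun q => ?_
  ring

theorem isBigO_integral_drift_mul_deriv_mul {Ψ : ℝ × ℝ → ℝ → ℝ}
    (hΨ : ∀ x ∈ Icc 0 π, ContDiffAt ℝ 2 (fun q : (ℝ × ℝ) × ℝ => Ψ q.1 q.2) (0, x))
    (hΨ0 : ∫ x in 0..π, deriv (Ψ 0) x * Ψ 0 x = 0) :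
    (fun p => ∫ x in 0..π, drift p x * deriv (Ψ p) x * Ψ 0 x) =O[𝓝 0] fun p => ‖p‖ ^ 2 := by
  have h_remainder := isBigO_intervalIntegral pi_pos.le (g := fun p => ‖p‖ ^ 2)
    (isBigO_drift_mul_deriv_mul_sub isCompact_Icc hΨ)
  rw [← uIcc_of_le pi_pos.le] at hΨ
  have h_product : ∀ x ∈ uIcc 0 π, ContDiffAt ℝ 1
      (fun q : (ℝ × ℝ) × ℝ => deriv (Ψ q.1) q.2 * Ψ 0 q.2) (0, x) := fun x hx =>
    (contDiffAt_deriv_of_uncurry (hΨ x hx) (by norm_num)).mul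
      (contDiffAt_comp_mk_snd ((hΨ x hx).of_le one_le_two))
  have h_integrable₀ : IntervalIntegrable (fun x => deriv (Ψ 0) x * Ψ 0 x) volume 0 π :=
    (eventually_intervalIntegrable_of_contDiffAt h_product).self_of_nhds
  have h_integrable_drift := eventually_intervalIntegrable_of_contDiffAt fun x hx =>
    (contDiffAt_drift_zero x).mul (h_product x hx)
  refine h_remainder.congr' ?_ .rfl
  filter_upwards [h_integrable_drift] with p hp
  simp only [← mul_assoc] at hp
  rw [integral_sub hp (h_integrable₀.const_mul _), integral_const_mul, hΨ0, mul_zero,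
    sub_zero]

theorem third_neumann_branch_first_order_general (ν : ℝ × ℝ → ℝ) (Ψ : ℝ × ℝ → ℝ → ℝ)
    (hΨ : ∀ x ∈ Icc 0 π, ContDiffAt ℝ 2 (fun q : (ℝ × ℝ) × ℝ => Ψ q.1 q.2) (0, x))
    (heq : ∀ᶠ p in 𝓝 0, ∀ x ∈ Ioo 0 π, Ttde p.1 p.2 (Ψ p) x + ν p * Ψ p x = 0)
    (hbc : ∀ᶠ p in 𝓝 0, derivWithin (Ψ p) (Icc 0 π) 0 = 0 ∧ derivWithin (Ψ p) (Icc 0 π) π = 0)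
    (hΨ0 : ∃ x ∈ Icc 0 π, Ψ 0 x ≠ 0) :
    (fun p => ν p - ν 0) =O[𝓝 0] fun p => p.1 ^ 2 + p.2 ^ 2 := by
  have hΨ_C2 := eventually_forall_contDiffAt (by simp) isCompact_Icc hΨ
  have h_ode : ∀ᶠ p in 𝓝 0, ∀ x ∈ Ioo 0 π,
      deriv (deriv (Ψ p)) x - drift p x * deriv (Ψ p) x + ν p * Ψ p x = 0 := by
    filter_upwards [hΨ_C2, heq] with p hp h x hx
    rw [← Ttde_eq_deriv hp (Ioo_subset_Icc_self hx), h x hx]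
  have h_neumann : ∀ᶠ p in 𝓝 0, deriv (Ψ p) 0 = 0 ∧ deriv (Ψ p) π = 0 := by
    filter_upwards [hΨ_C2, hbc] with p hp h
    have h_eq := derivWithin_Icc_eqOn_deriv pi_pos fun x hx =>
      (hp x hx).differentiableAt two_ne_zero
    rwa [h_eq (left_mem_Icc.2 pi_pos.le), h_eq (right_mem_Icc.2 pi_pos.le)] at h
  have h_ode₀ : ∀ x ∈ Ioo 0 π, deriv (deriv (Ψ 0)) x + ν 0 * Ψ 0 x = 0 := by
    simpa only [drift_zero, zero_mul, sub_zero] using h_ode.self_of_nhds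
  obtain ⟨h_left, h_right⟩ := h_neumann.self_of_nhds
  have h_green : ∀ᶠ p in 𝓝 0, (ν p - ν 0) * ∫ x in 0..π, Ψ p x * Ψ 0 x
      = ∫ x in 0..π, drift p x * deriv (Ψ p) x * Ψ 0 x := by
    filter_upwards [hΨ_C2, h_ode, h_neumann] with p hp h_ode_p ⟨h0, hπ⟩
    exact sub_mul_integral_mul_of_neumann pi_pos.le hp hΨ_C2.self_of_nhds h0 hπ h_left h_right
      h_ode_p h_ode₀
  have h_rhs := isBigO_integral_drift_mul_deriv_mul hΨ
    (integral_deriv_mul_self_of_neumann pi_pos.le hΨ_C2.self_of_nhds h_left h_right h_ode₀)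
  have h_pairing : Tendsto (fun p => ∫ x in 0..π, Ψ p x * Ψ 0 x) (𝓝 0)
      (𝓝 (∫ x in 0..π, Ψ 0 x * Ψ 0 x)) := tendsto_intervalIntegral_of_contDiffAt
    (f := fun q => Ψ q.1 q.2 * Ψ 0 q.2) pi_pos.le fun x hx =>
      ((hΨ x hx).mul (contDiffAt_comp_mk_snd (hΨ x hx))).of_le one_le_two
  have h_pos : 0 < ∫ x in 0..π, Ψ 0 x * Ψ 0 x := integral_mul_self_pos pi_pos
    (fun x hx => (hΨ_C2.self_of_nhds x hx).continuousAt.continuousWithinAt) hΨ0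
  exact (isBigO_of_mul_isBigO_of_tendsto (h_rhs.congr' (h_green.mono fun _ h => h.symm) .rfl)
    h_pairing h_pos.ne').trans (isBigO_norm_sq_sq_add_sq _)

end

/-- First-order expansion of the third Neumann eigenvalue branch of
`T̃_{η,ε}`: `ν(η,ε) = 4 + O(η² + ε²)`. -/
theorem third_neumann_branch_first_order
    (U : Set (ℝ × ℝ)) (hUopen : IsOpen U) (hU0 : (0, 0) ∈ U)
    (hUsub : U ⊆ {p : ℝ × ℝ | |p.1| + |p.2| < 1/100})
    (ν : ℝ × ℝ → ℝ) (Ψ : ℝ × ℝ → ℝ → ℝ)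
    (hν : AnalyticOnNhd ℝ ν U)
    (hΨ : AnalyticOnNhd ℝ (fun q : (ℝ × ℝ) × ℝ => Ψ q.1 q.2) (U ×ˢ Set.Icc 0 π))
    (heq : ∀ p ∈ U, ∀ x ∈ Set.Ioo (0:ℝ) π, Ttde p.1 p.2 (Ψ p) x + ν p * Ψ p x = 0)
    (hbc : ∀ p ∈ U, derivWithin (Ψ p) (Set.Icc 0 π) 0 = 0 ∧
      derivWithin (Ψ p) (Set.Icc 0 π) π = 0)
    (hnorm : ∀ p ∈ U, ∫ x in (0:ℝ)..π, Ψ p x * Real.cos (2*x) = π/2)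
    (hν0 : ν (0, 0) = 4)
    (hΨ0 : ∀ x ∈ Set.Icc (0:ℝ) π, Ψ (0, 0) x = Real.cos (2*x)) :
    ∃ C > (0:ℝ), ∃ V ⊆ U, IsOpen V ∧ (0, 0) ∈ V ∧
      ∀ p ∈ V, |ν p - 4| ≤ C * (p.1^2 + p.2^2) := by
  have hU : U ∈ nhds (0, 0) := hUopen.mem_nhds hU0
  have hΨ_ne : Ψ (0, 0) 0 ≠ 0 := by
    rw [hΨ0 0 (left_mem_Icc.2 pi_pos.le), mul_zero, cos_zero]
    exact one_ne_zero
  have h_isBigO := third_neumann_branch_first_order_general ν Ψ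
    (fun x hx => (hΨ (0, x) ⟨hU0, hx⟩).contDiffAt) (Filter.mem_of_superset hU heq)
    (Filter.mem_of_superset hU hbc) ⟨0, left_mem_Icc.2 pi_pos.le, hΨ_ne⟩
  obtain ⟨C, hC, V, hVU, hV, hV0, h_bound⟩ := exists_isOpen_forall_norm_le_of_isBigO h_isBigO hU
  refine ⟨C, hC, V, hVU, hV, hV0, fun p hp => ?_⟩
  rw [← hν0, ← Real.norm_eq_abs, ← Real.norm_of_nonneg (add_nonneg (sq_nonneg p.1) (sq_nonneg p.2))]
  exact h_bound p hp

end
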